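/- arXiv:2502.16727 — 4 statements merged into one kernel-verified Lean document; each statement's English description precedes it below -/
import Mathlib

section
/- Let K be a field, let M and N be finite-dimensional K-vector spaces, and let h : M → N be a K-linear map. Then the subspace T_h = {A ∘ h + h ∘ B : A ∈ End_K(N), B ∈ End_K(M)} of Hom_K(M, N) — the tangent space at h to the orbit of h under the action (P, Q)·h = Q ∘ h ∘ P⁻¹ of GL(M) × GL(N) — is equal to the subspace {X ∈ Hom_K(M, N) : X(ker h) ⊆ range h}. (This is the tangent-space computation for the orbit Σ^k in §3.1.1.) -/
/-!
If `s` is an inner inverse of `h`, i.e. `h ∘ s ∘ h = h`, then `s ∘ h` is idempotent with kernel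
`ker h`, and `h ∘ s` restricts to the identity on `range h`. Splitting
`f = f ∘ s ∘ h + f ∘ (1 - s ∘ h)`, the first summand has the form `A ∘ h`. Since `1 - s ∘ h` maps
into `ker h`, a map `f` sending `ker h` into `range h` gives a second summand with values in
`range h`, so that it is unchanged by `h ∘ s` and has the form `h ∘ B`.
-/

section OrbitTangentSpace

variable {R M N P Q : Type*} [Ring R] [AddCommGroup M] [Module R M] [AddCommGroup N] [Module R N]
  [AddCommGroup P] [Module R P] [AddCommGroup Q] [Module R Q]

theorem exists_comp_comp_eq_self [IsSemisimpleModule R M] [IsSemisimpleModule R N]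
    (h : M →ₗ[R] N) : ∃ s : N →ₗ[R] M, h ∘ₗ s ∘ₗ h = h := by
  obtain ⟨r, hr⟩ : ∃ r : LinearMap.range h →ₗ[R] M, h.rangeRestrict ∘ₗ r = LinearMap.id :=
    IsSemisimpleModule.lifting_property _ h.surjective_rangeRestrict _
  obtain ⟨s, hs⟩ : ∃ s : N →ₗ[R] M, s ∘ₗ (LinearMap.range h).subtype = r :=
    IsSemisimpleModule.extension_property _ (Submodule.subtype_injective _) _
  refine ⟨s, LinearMap.ext fun x ↦ ?_⟩
  calc h (s (h x)) = h (r (h.rangeRestrict x)) :=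
        congrArg h (LinearMap.congr_fun hs (h.rangeRestrict x))
    _ = h x := congrArg Subtype.val (LinearMap.congr_fun hr (h.rangeRestrict x))

theorem comp_comp_eq_of_range_le {k : Q →ₗ[R] N} {t : N →ₗ[R] Q} (ht : k ∘ₗ t ∘ₗ k = k)
    {f : M →ₗ[R] N} (hf : LinearMap.range f ≤ LinearMap.range k) : k ∘ₗ t ∘ₗ f = f := by
  ext x
  obtain ⟨y, hy⟩ := hf (LinearMap.mem_range_self f x)
  simpa only [LinearMap.comp_apply, hy] using LinearMap.congr_fun ht y

theorem comp_id_sub_comp_eq_zero {g : M →ₗ[R] P} {s : P →ₗ[R] M} (hs : g ∘ₗ s ∘ₗ g = g) :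
    g ∘ₗ (LinearMap.id - s ∘ₗ g) = 0 := by
  rw [LinearMap.comp_sub, LinearMap.comp_id, hs, sub_self]

theorem exists_eq_comp_add_comp_iff {g : M →ₗ[R] P} {s : P →ₗ[R] M} (hs : g ∘ₗ s ∘ₗ g = g)
    {k : Q →ₗ[R] N} {t : N →ₗ[R] Q} (ht : k ∘ₗ t ∘ₗ k = k) (f : M →ₗ[R] N) :
    (∃ (A : P →ₗ[R] N) (B : M →ₗ[R] Q), f = A ∘ₗ g + k ∘ₗ B) ↔
      ∀ x, g x = 0 → f x ∈ LinearMap.range k := by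
  constructor
  · rintro ⟨A, B, rfl⟩ x hx
    exact ⟨B x, by simp [hx]⟩
  · intro hf
    have range_le : LinearMap.range (f ∘ₗ (LinearMap.id - s ∘ₗ g)) ≤ LinearMap.range k := by
      rintro _ ⟨x, rfl⟩
      exact hf _ (LinearMap.congr_fun (comp_id_sub_comp_eq_zero hs) x)
    refine ⟨f ∘ₗ s, t ∘ₗ f ∘ₗ (LinearMap.id - s ∘ₗ g), ?_⟩
    rw [comp_comp_eq_of_range_le ht range_le, LinearMap.comp_sub, LinearMap.comp_id,
      LinearMap.comp_assoc, add_sub_cancel]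

theorem stmt_5_general [IsSemisimpleModule R M] [IsSemisimpleModule R N] (h : M →ₗ[R] N) :
    {f : M →ₗ[R] N | ∃ (A : N →ₗ[R] N) (B : M →ₗ[R] M), f = A ∘ₗ h + h ∘ₗ B} =
      {f : M →ₗ[R] N | ∀ x : M, h x = 0 → f x ∈ LinearMap.range h} := by
  obtain ⟨s, hs⟩ := exists_comp_comp_eq_self h
  exact Set.ext fun f ↦ exists_eq_comp_add_comp_iff hs hs f

end OrbitTangentSpace

/-- **Tangent space to the `GL(M) × GL(N)`-orbit of a linear map (§3.1.1).**
For finite-dimensional vector spaces `M, N` over a field `K` and `h : M →ₗ[K] N`, the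
tangent space `{A ∘ h + h ∘ B}` to the orbit of `h` equals
`{X : X(ker h) ⊆ range h}`. -/
theorem stmt_5 (K M N : Type*) [Field K] [AddCommGroup M] [Module K M]
    [AddCommGroup N] [Module K N] [FiniteDimensional K M] [FiniteDimensional K N]
    (h : M →ₗ[K] N) :
    {f : M →ₗ[K] N | ∃ (A : N →ₗ[K] N) (B : M →ₗ[K] M), f = A ∘ₗ h + h ∘ₗ B} =
      {f : M →ₗ[K] N | ∀ x : M, h x = 0 → f x ∈ LinearMap.range h} :=
  stmt_5_general h
end

section
/- Let K be a field, let M and N be finite-dimensional K-vector spaces, and let h : M → N be a K-linear map with dim ker h = k and dim coker h = l (where coker h = N / range h). Then the quotient vector space Hom_K(M, N) / {X ∈ Hom_K(M, N) : X(ker h) ⊆ range h} is linearly isomorphic to Hom_K(ker h, coker h); consequently the tangent space {A ∘ h + h ∘ B : A ∈ End_K(N), B ∈ End_K(M)} to the GL(M) × GL(N)-orbit of h has codimension k·l in Hom_K(M, N). (This identifies the normal space of the orbit Σ^k with Hom(ker h, coker h) and gives the expected codimension kl of the degeneracy locus, as in §1.1.1 and §3.1.1.) -/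
/-!
Restricting `X : M → N` to a subspace `p ⊆ M` and projecting to `N ⧸ q` maps `Hom(M, N)` onto
`Hom(p, N ⧸ q)`, because over a field maps extend from subspaces and lift along quotients; its
kernel is `{X : X(p) ⊆ q}`. For `p = ker h` and `q = range h` this kernel is the tangent space: if
`X(ker h) ⊆ range h`, then `X` agrees on `ker h` with some `h ∘ B`, and `X - h ∘ B`, vanishing on
`ker h`, has the form `A ∘ h`.
-/

open Module LinearMap

theorem exists_comp_eq_of_range_le_range {R P M N : Type*} [Semiring R]
    [AddCommMonoid P] [Module R P] [Projective R P] [AddCommMonoid M] [Module R M]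
    [AddCommMonoid N] [Module R N] {f : M →ₗ[R] N} {g : P →ₗ[R] N} (hgf : range g ≤ range f) :
    ∃ B : P →ₗ[R] M, f ∘ₗ B = g := by
  obtain ⟨B, hB⟩ := projective_lifting_property f.rangeRestrict
    (g.codRestrict (range f) fun x ↦ hgf (mem_range_self g x)) f.surjective_rangeRestrict
  exact ⟨B, LinearMap.ext fun x ↦ congrArg Subtype.val (LinearMap.congr_fun hB x)⟩

theorem exists_comp_eq_of_ker_le_ker {K V W U : Type*} [DivisionRing K]
    [AddCommGroup V] [Module K V] [AddCommGroup W] [Module K W] [AddCommGroup U] [Module K U]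
    {f : V →ₗ[K] W} {g : V →ₗ[K] U} (hfg : ker f ≤ ker g) :
    ∃ A : W →ₗ[K] U, A ∘ₗ f = g := by
  obtain ⟨A, hA⟩ := exists_extend ((ker f).liftQ g hfg ∘ₗ f.quotKerEquivRange.symm.toLinearMap)
  refine ⟨A, LinearMap.ext fun x ↦ ?_⟩
  simpa [f.quotKerEquivRange_symm_apply_image x] using
    LinearMap.congr_fun hA ⟨f x, mem_range_self f x⟩

section RestrictMkQ

variable {R M N : Type*} [CommRing R] [AddCommGroup M] [Module R M] [AddCommGroup N] [Module R N]

/-- The map `Hom(M, N) → Hom(p, N ⧸ q)` sending `X` to the composite `p ↪ M → N ↠ N ⧸ q`, which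
identifies the normal space of an orbit when `p` and `q` are the kernel and range of a map. -/
def restrictMkQ (p : Submodule R M) (q : Submodule R N) : (M →ₗ[R] N) →ₗ[R] (p →ₗ[R] N ⧸ q) :=
  compRight R q.mkQ ∘ₗ domRestrict' p

theorem ker_restrictMkQ (p : Submodule R M) (q : Submodule R N) :
    ker (restrictMkQ p q) = p.compatibleMaps q := by
  ext X
  simp [restrictMkQ, LinearMap.ext_iff, Submodule.compatibleMaps, SetLike.le_def]

end RestrictMkQ

section VectorSpace

variable {K M N : Type*} [Field K] [AddCommGroup M] [Module K M] [AddCommGroup N] [Module K N]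

theorem restrictMkQ_surjective (p : Submodule K M) (q : Submodule K N) :
    Function.Surjective (restrictMkQ p q) := by
  intro Y
  obtain ⟨Z, hZ⟩ := Y.exists_extend
  obtain ⟨X, hX⟩ := projective_lifting_property q.mkQ Z q.mkQ_surjective
  exact ⟨X, by rw [← hZ, ← hX]; rfl⟩

/-- The isomorphism `Hom(M, N) ⧸ {X : X(p) ⊆ q} ≃ Hom(p, N ⧸ q)` induced by `restrictMkQ`. -/
noncomputable def quotientCompatibleMapsEquiv (p : Submodule K M) (q : Submodule K N) :
    ((M →ₗ[K] N) ⧸ p.compatibleMaps q) ≃ₗ[K] (p →ₗ[K] N ⧸ q) :=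
  (Submodule.quotEquivOfEq _ _ (ker_restrictMkQ p q).symm).trans
    ((restrictMkQ p q).quotKerEquivOfSurjective (restrictMkQ_surjective p q))

theorem mem_compatibleMaps_ker_range_iff {h X : M →ₗ[K] N} :
    X ∈ (ker h).compatibleMaps (range h) ↔
      ∃ (A : N →ₗ[K] N) (B : M →ₗ[K] M), X = A ∘ₗ h + h ∘ₗ B := by
  constructor
  · intro hX
    have range_le : range (X.domRestrict (ker h)) ≤ range h := by
      rintro _ ⟨x, rfl⟩
      exact hX x.2
    obtain ⟨B₀, hB₀⟩ := exists_comp_eq_of_range_le_range range_le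
    obtain ⟨B, hB⟩ := B₀.exists_extend
    have ker_le : ker h ≤ ker (X - h ∘ₗ B) := by
      intro x hx
      have hBx : h (B x) = X x := by
        rw [← hB] at hB₀
        exact LinearMap.congr_fun hB₀ ⟨x, hx⟩
      simp [hBx]
    obtain ⟨A, hA⟩ := exists_comp_eq_of_ker_le_ker ker_le
    exact ⟨A, B, by rw [hA, sub_add_cancel]⟩
  · rintro ⟨A, B, rfl⟩ x hx
    exact ⟨B x, by simp [mem_ker.1 hx]⟩

theorem span_comp_add_comp_eq_compatibleMaps (h : M →ₗ[K] N) :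
    Submodule.span K {f : M →ₗ[K] N | ∃ (A : N →ₗ[K] N) (B : M →ₗ[K] M), f = A ∘ₗ h + h ∘ₗ B} =
      (ker h).compatibleMaps (range h) := by
  simp only [← mem_compatibleMaps_ker_range_iff, SetLike.setOfPred_mem_eq, Submodule.span_eq]

theorem stmt_6_general (h : M →ₗ[K] N) [FiniteDimensional K (ker h)]
    [FiniteDimensional K (N ⧸ range h)] (k l : ℕ)
    (hk : finrank K (ker h) = k) (hl : finrank K (N ⧸ range h) = l) :
    Nonempty (((M →ₗ[K] N) ⧸ (ker h).compatibleMaps (range h)) ≃ₗ[K]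
      (ker h →ₗ[K] N ⧸ range h)) ∧
    FiniteDimensional K ((M →ₗ[K] N) ⧸ Submodule.span K
      {f : M →ₗ[K] N | ∃ (A : N →ₗ[K] N) (B : M →ₗ[K] M), f = A ∘ₗ h + h ∘ₗ B}) ∧
    finrank K ((M →ₗ[K] N) ⧸ Submodule.span K
      {f : M →ₗ[K] N | ∃ (A : N →ₗ[K] N) (B : M →ₗ[K] M), f = A ∘ₗ h + h ∘ₗ B}) = k * l := by
  rw [span_comp_add_comp_eq_compatibleMaps]
  let e := quotientCompatibleMapsEquiv (ker h) (range h)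
  refine ⟨⟨e⟩, Module.Finite.equiv e.symm, ?_⟩
  rw [e.finrank_eq, finrank_linearMap, hk, hl]

end VectorSpace

/-- **Normal space to the orbit `Σ^k` and its codimension (§1.1.1, §3.1.1).**
For `h : M →ₗ[K] N` with `dim ker h = k` and `dim coker h = l`, the quotient of
`Hom(M, N)` by `{X : X(ker h) ⊆ range h}` is linearly isomorphic to
`Hom(ker h, coker h)`; consequently the tangent space `{A ∘ h + h ∘ B}` to the
`GL(M) × GL(N)`-orbit of `h` has codimension `k * l` in `Hom(M, N)`. -/
theorem stmt_6 (K M N : Type*) [Field K] [AddCommGroup M] [Module K M]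
    [AddCommGroup N] [Module K N] [FiniteDimensional K M] [FiniteDimensional K N]
    (h : M →ₗ[K] N) (k l : ℕ)
    (hk : Module.finrank K (LinearMap.ker h) = k)
    (hl : Module.finrank K (N ⧸ LinearMap.range h) = l) :
    Nonempty (((M →ₗ[K] N) ⧸
        Submodule.compatibleMaps (LinearMap.ker h) (LinearMap.range h)) ≃ₗ[K]
      ((LinearMap.ker h) →ₗ[K] (N ⧸ LinearMap.range h))) ∧
    Module.finrank K (M →ₗ[K] N) -
        Module.finrank K (Submodule.span K
          {f : M →ₗ[K] N | ∃ (A : N →ₗ[K] N) (B : M →ₗ[K] M), f = A ∘ₗ h + h ∘ₗ B}) =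
      k * l := by
  obtain ⟨normalSpaceEquiv, -, finrank_normalSpace⟩ := stmt_6_general h k l hk hl
  exact ⟨normalSpaceEquiv, (Submodule.finrank_quotient _).symm.trans finrank_normalSpace⟩
end

section
/- Let K be a field and let M, N, S be finite-dimensional K-vector spaces. Given a K-linear map h : M → N, let h̃ = h × id_S : M × S → N × S be its trivial suspension, (x, s) ↦ (h x, s), and let ι : Hom_K(M, N) → Hom_K(M × S, N × S) be the embedding ι(Z)(x, s) = (Z x, 0). Then Hom_K(M × S, N × S) = T_{h̃} + ι(Hom_K(M, N)), where T_{h̃} = {A ∘ h̃ + h̃ ∘ B : A ∈ End_K(N × S), B ∈ End_K(M × S)} is the tangent space to the GL(M × S) × GL(N × S)-orbit of h̃. That is, the suspension embedding is transverse to every orbit of the group of linear coordinate changes: this is the 1-jet instance of the key Lemma 2.5 (transversality of the embedding J^k(m,n) → J^k(m+s, n+s), jg ↦ j(g × id_s), to all K-orbits). -/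
/-!
Write `F = (a b; c d)` in block form with respect to `M × S` and `N × S`. As `h̃ = h × id_S` is the
identity on `S`, it satisfies `snd ∘ h̃ = snd` and `h̃ ∘ inr = inr`. Hence the column `(b; d)`
of `F` has the form `A ∘ h̃`, the entry `c` has the form `h̃ ∘ B`, and the entry `a` is `ι(a)`.
-/

section ProductBlocks

open LinearMap

variable {R M N S T P : Type*} [Semiring R] [AddCommMonoid M] [Module R M]
  [AddCommMonoid N] [Module R N] [AddCommMonoid S] [Module R S]
  [AddCommMonoid T] [Module R T] [AddCommMonoid P] [Module R P]

theorem inl_comp_fst_comp_add_inr_comp_snd_comp (G : P →ₗ[R] N × T) :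
    inl R N T ∘ₗ fst R N T ∘ₗ G + inr R N T ∘ₗ snd R N T ∘ₗ G = G := by
  ext x <;> simp

theorem snd_comp_prodMap (h : M →ₗ[R] N) (g : S →ₗ[R] T) :
    snd R N T ∘ₗ h.prodMap g = g ∘ₗ snd R M S :=
  rfl

theorem prodMap_comp_inr (h : M →ₗ[R] N) (g : S →ₗ[R] T) :
    h.prodMap g ∘ₗ inr R M S = inr R N T ∘ₗ g := by
  ext s <;> simp

theorem stmt_7_general (h : M →ₗ[R] N) (F : M × S →ₗ[R] N × S) :
    ∃ (A : N × S →ₗ[R] N × S) (B : M × S →ₗ[R] M × S) (Z : M →ₗ[R] N),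
      F = (A ∘ₗ h.prodMap LinearMap.id + h.prodMap LinearMap.id ∘ₗ B) +
        inl R N S ∘ₗ Z ∘ₗ fst R M S := by
  let Fₘ : M →ₗ[R] N × S := F ∘ₗ inl R M S
  let Fₛ : S →ₗ[R] N × S := F ∘ₗ inr R M S
  have hA : (Fₛ ∘ₗ snd R N S) ∘ₗ h.prodMap LinearMap.id = Fₛ ∘ₗ snd R M S := by
    rw [comp_assoc, snd_comp_prodMap, id_comp]
  have hB : h.prodMap LinearMap.id ∘ₗ inr R M S ∘ₗ (snd R N S ∘ₗ Fₘ) ∘ₗ fst R M S =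
      inr R N S ∘ₗ (snd R N S ∘ₗ Fₘ) ∘ₗ fst R M S := by
    rw [← comp_assoc, prodMap_comp_inr, comp_id]
  refine ⟨Fₛ ∘ₗ snd R N S, inr R M S ∘ₗ (snd R N S ∘ₗ Fₘ) ∘ₗ fst R M S, fst R N S ∘ₗ Fₘ, ?_⟩
  rw [hA, hB]
  calc F = Fₘ ∘ₗ fst R M S + Fₛ ∘ₗ snd R M S := (coprod_comp_inl_inr F).symm
    _ = (inl R N S ∘ₗ (fst R N S ∘ₗ Fₘ) ∘ₗ fst R M S +
          inr R N S ∘ₗ (snd R N S ∘ₗ Fₘ) ∘ₗ fst R M S) + Fₛ ∘ₗ snd R M S :=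
        congrArg (· + Fₛ ∘ₗ snd R M S)
          (inl_comp_fst_comp_add_inr_comp_snd_comp (Fₘ ∘ₗ fst R M S)).symm
    _ = (Fₛ ∘ₗ snd R M S + inr R N S ∘ₗ (snd R N S ∘ₗ Fₘ) ∘ₗ fst R M S) +
          inl R N S ∘ₗ (fst R N S ∘ₗ Fₘ) ∘ₗ fst R M S := by
        abel

end ProductBlocks

/-- **Transversality of the trivial suspension to all orbits (1-jet instance of Lemma 2.5).**
For `h : M →ₗ[K] N` with trivial suspension `h̃ = h × id_S : M × S → N × S` and the
embedding `ι : Hom(M, N) → Hom(M × S, N × S)`, `ι(Z)(x, s) = (Z x, 0)`, one has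
`Hom(M × S, N × S) = T_{h̃} + ι(Hom(M, N))`, where `T_{h̃} = {A ∘ h̃ + h̃ ∘ B}` is the
tangent space to the `GL(M × S) × GL(N × S)`-orbit of `h̃`. -/
theorem stmt_7 (K M N S : Type*) [Field K] [AddCommGroup M] [Module K M]
    [AddCommGroup N] [Module K N] [AddCommGroup S] [Module K S]
    [FiniteDimensional K M] [FiniteDimensional K N] [FiniteDimensional K S]
    (h : M →ₗ[K] N) (F : (M × S) →ₗ[K] (N × S)) :
    ∃ (A : (N × S) →ₗ[K] (N × S)) (B : (M × S) →ₗ[K] (M × S)) (Z : M →ₗ[K] N),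
      F = (A ∘ₗ (h.prodMap (LinearMap.id : S →ₗ[K] S)) +
            (h.prodMap (LinearMap.id : S →ₗ[K] S)) ∘ₗ B) +
          (LinearMap.inl K N S) ∘ₗ Z ∘ₗ (LinearMap.fst K M S) :=
  stmt_7_general h F
end

section
/- Let m, n ≥ 1 and let P ∈ ℚ[x_1, …, x_m, y_1, …, y_n] be a polynomial that is symmetric in x_1, …, x_m and symmetric in y_1, …, y_n separately, and which satisfies the cancellation (supersymmetry) property: the polynomial obtained from P by substituting x_m = T and y_n = T, regarded as a polynomial in T over ℚ[x_1, …, x_{m−1}, y_1, …, y_{n−1}], is constant in T. Then P belongs to the ℚ-subalgebra of ℚ[x, y] generated by the power-sum differences p_k = ∑_{i=1}^{m} x_i^k − ∑_{j=1}^{n} y_j^k for k ≥ 1. (This is the structure theorem for supersymmetric polynomials underlying the claim in §2.3 that, by the stabilization property, every Thom polynomial tp_G(W) is supersymmetric and hence can be written in terms of the quotient Chern classes.) -/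
/-!
Setting one `x` and one `y` to zero preserves supersymmetry and sends `pₖ` to `pₖ`. By induction on
the number of variables it therefore suffices to treat a supersymmetric `P` that vanishes under this
substitution, hence on every hyperplane `xᵢ = yⱼ`, so that `P = ∏ᵢⱼ (xᵢ - yⱼ) * F` with `F`
symmetric in each set of variables. As `pₖ(y) = pₖ(x) - pₖ(x; y)`, such an `F` is a combination of
symmetric polynomials `f(x)` with coefficients in the algebra `A` generated by the `pₖ(x; y)`.

That `∏ᵢⱼ (xᵢ - yⱼ) * f(x)` lies in `A` follows from a Jacobi–Trudi identity. Let `hₖ` be the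
coefficients of `H = ∏ⱼ (1 - yⱼ t) / ∏ᵢ (1 - xᵢ t)`; they lie in `A` by Newton's recursion.
Comparing coefficients in `∏_{l ≠ i} (1 - xₗ t) * H = ∏ⱼ (1 - yⱼ t) / (1 - xᵢ t)` gives, for
exponents `a₀, …, aₘ₋₁` and `n` variables `y`,
`det (xᵢ ^ j) * det (h_{n + aⱼ - s})ₛⱼ = ∏ᵢⱼ (xᵢ - yⱼ) * det (xᵢ ^ aⱼ)`,
and `f(x) * det (xᵢ ^ j)` is a linear combination of the alternants `det (xᵢ ^ aⱼ)`.
-/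

section GeneratingFunction

open PowerSeries

variable {S : Type*} [CommRing S]

/-- The geometric series `1 / (1 - a t) = ∑ aᵏ tᵏ`. -/
noncomputable def geomSeries (a : S) : S⟦X⟧ := mk fun k => a ^ k

theorem one_sub_mul_geomSeries (a : S) : (1 - C a * X) * geomSeries a = 1 := by
  ext (_ | k)
  · simp [geomSeries]
  · rw [sub_mul, one_mul, mul_assoc, map_sub, coeff_C_mul, coeff_succ_X_mul]
    simp [geomSeries, coeff_one, pow_succ']

theorem derivative_one_sub_C_mul_X (a : S) : d⁄dX S (1 - C a * X) = -C a := by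
  simp [Derivation.leibniz]

theorem derivative_one_sub_C_mul_X_eq_mul (a : S) :
    d⁄dX S (1 - C a * X) = (1 - C a * X) * -(C a * geomSeries a) := by
  rw [derivative_one_sub_C_mul_X]
  linear_combination C a * one_sub_mul_geomSeries a

theorem derivative_geomSeries (a : S) :
    d⁄dX S (geomSeries a) = geomSeries a * (C a * geomSeries a) := by
  rw [Derivation.leibniz_of_mul_eq_one _ ((mul_comm _ _).trans (one_sub_mul_geomSeries a)),
    derivative_one_sub_C_mul_X, smul_eq_mul]
  ring

theorem coeff_prod_mul_geomSeries {κ : Type*} (s : Finset κ) (y : κ → S) (a : S) (k : ℕ) :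
    coeff (s.card + k) ((∏ j ∈ s, (1 - C (y j) * X)) * geomSeries a) =
      a ^ k * ∏ j ∈ s, (a - y j) := by
  classical
  induction s using Finset.induction_on generalizing k with
  | empty => simp [geomSeries]
  | insert b s hb ih =>
    rw [Finset.prod_insert hb, Finset.prod_insert hb, Finset.card_insert_of_notMem hb, mul_assoc,
      sub_mul, one_mul, mul_assoc, map_sub, coeff_C_mul, add_right_comm, coeff_succ_X_mul, ih,
      add_assoc, ih]
    ring

theorem derivation_prod_eq_prod_mul_sum {R A ι : Type*} [CommSemiring R] [CommSemiring A]
    [Algebra R A] (D : Derivation R A A) (s : Finset ι) {f q : ι → A}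
    (h : ∀ i ∈ s, D (f i) = f i * q i) :
    D (∏ i ∈ s, f i) = (∏ i ∈ s, f i) * ∑ i ∈ s, q i := by
  classical
  induction s using Finset.induction_on with
  | empty => simp
  | insert a s ha ih =>
    rw [Finset.prod_insert ha, Finset.sum_insert ha, D.leibniz, h a (s.mem_insert_self a),
      ih fun i hi => h i (Finset.mem_insert_of_mem hi), smul_eq_mul, smul_eq_mul]
    ring

theorem coeff_mem_of_derivative_eq_mul {K : Type*} [Field K] [CharZero K] [Algebra K S]
    (A : Subalgebra K S) {H Q : S⟦X⟧} (hH : d⁄dX S H = H * Q) (h_zero : constantCoeff H ∈ A)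
    (hQ : ∀ k, coeff k Q ∈ A) (k : ℕ) : coeff k H ∈ A := by
  induction k using Nat.strong_induction_on with
  | _ k ih =>
    cases k with
    | zero => rwa [coeff_zero_eq_constantCoeff_apply]
    | succ k =>
      have h_smul : ((k : K) + 1) • coeff (k + 1) H ∈ A := by
        have h_coeff := congrArg (coeff k) hH
        rw [coeff_derivative, coeff_mul] at h_coeff
        rw [Algebra.smul_def, map_add, map_natCast, map_one, mul_comm, h_coeff]
        refine A.sum_mem fun p hp => A.mul_mem (ih p.1 ?_) (hQ p.2)
        exact Finset.Nat.antidiagonal.fst_lt hp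
      have hk : (k : K) + 1 ≠ 0 := k.cast_add_one_ne_zero
      simpa only [inv_smul_smul₀ hk] using A.smul_mem h_smul ((k : K) + 1)⁻¹

variable {ι κ : Type*} [Fintype ι] [Fintype κ]

/-- The generating function `∏ⱼ (1 - yⱼ t) / ∏ᵢ (1 - xᵢ t)` of the complete supersymmetric
polynomials `hₖ(x / y)`. -/
noncomputable def superGenFun (x : ι → S) (y : κ → S) : S⟦X⟧ :=
  (∏ j, (1 - C (y j) * X)) * ∏ i, geomSeries (x i)

theorem constantCoeff_superGenFun (x : ι → S) (y : κ → S) :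
    constantCoeff (superGenFun x y) = 1 := by
  have h_geom (a : S) : constantCoeff (geomSeries a) = 1 := by
    rw [← coeff_zero_eq_constantCoeff_apply, geomSeries, coeff_mk, pow_zero]
  simp [superGenFun, h_geom]

theorem derivative_superGenFun (x : ι → S) (y : κ → S) :
    d⁄dX S (superGenFun x y) = superGenFun x y *
      (∑ i, C (x i) * geomSeries (x i) - ∑ j, C (y j) * geomSeries (y j)) := by
  rw [superGenFun, Derivation.leibniz,
    derivation_prod_eq_prod_mul_sum _ _ fun i _ => derivative_geomSeries (x i),
    derivation_prod_eq_prod_mul_sum _ _ fun j _ => derivative_one_sub_C_mul_X_eq_mul (y j),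
    Finset.sum_neg_distrib, smul_eq_mul, smul_eq_mul]
  ring

theorem coeff_superGenFun_mem {K : Type*} [Field K] [CharZero K] [Algebra K S]
    (A : Subalgebra K S) {x : ι → S} {y : κ → S}
    (hA : ∀ k, 1 ≤ k → ∑ i, x i ^ k - ∑ j, y j ^ k ∈ A) (k : ℕ) :
    coeff k (superGenFun x y) ∈ A := by
  refine coeff_mem_of_derivative_eq_mul A (derivative_superGenFun x y) ?_ (fun l => ?_) k
  · rw [constantCoeff_superGenFun]
    exact A.one_mem
  · simpa [geomSeries, pow_succ'] using hA (l + 1) l.succ_pos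

end GeneratingFunction

section JacobiTrudi

open PowerSeries

variable {S : Type*} [CommRing S] {κ : Type*} [Fintype κ] {m : ℕ}

/-- The polynomial `∏_{l ≠ i} (1 - xₗ t)`. -/
noncomputable def erasedProd (x : Fin m → S) (i : Fin m) : Polynomial S :=
  ∏ l ∈ {i}ᶜ, (1 - Polynomial.C (x l) * Polynomial.X)

theorem natDegree_erasedProd_lt (x : Fin m → S) (i : Fin m) : (erasedProd x i).natDegree < m := by
  have h_factor (l : Fin m) : (1 - Polynomial.C (x l) * Polynomial.X).natDegree ≤ 1 := by
    compute_degree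
  calc (erasedProd x i).natDegree ≤ ∑ _l ∈ ({i}ᶜ : Finset (Fin m)), 1 :=
        (Polynomial.natDegree_prod_le _ _).trans (Finset.sum_le_sum fun l _ => h_factor l)
    _ = m - 1 := by simp [Finset.card_compl]
    _ < m := Nat.sub_one_lt i.pos.ne'

theorem erasedProd_mul_superGenFun (x : Fin m → S) (y : κ → S) (i : Fin m) :
    (erasedProd x i : S⟦X⟧) * superGenFun x y =
      (∏ j, (1 - C (y j) * X)) * geomSeries (x i) := by
  have h_coe : (erasedProd x i : S⟦X⟧) = ∏ l ∈ {i}ᶜ, (1 - C (x l) * X) := by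
    rw [erasedProd, ← Polynomial.coeToPowerSeries.ringHom_apply, map_prod]
    simp
  have h_inv : (∏ l ∈ {i}ᶜ, (1 - C (x l) * X)) * ∏ l ∈ {i}ᶜ, geomSeries (x l) = 1 := by
    rw [← Finset.prod_mul_distrib]
    exact Finset.prod_eq_one fun l _ => one_sub_mul_geomSeries (x l)
  rw [h_coe, superGenFun, ← Finset.prod_compl_mul_prod {i} fun l => geomSeries (x l),
    Finset.prod_singleton]
  linear_combination (∏ j, (1 - C (y j) * X)) * geomSeries (x i) * h_inv

theorem coeff_coe_mul_eq_sum {p : Polynomial S} (hp : p.natDegree < m) (H : S⟦X⟧) (N : ℕ) :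
    coeff N ((p : S⟦X⟧) * H) = ∑ s : Fin m, p.coeff s * coeff N (X ^ (s : ℕ) * H) := by
  conv_lhs => rw [p.as_sum_range' m hp, ← Fin.sum_univ_eq_sum_range (fun s =>
    Polynomial.monomial s (p.coeff s)), ← Polynomial.coeToPowerSeries.ringHom_apply, map_sum,
    Finset.sum_mul, map_sum]
  refine Finset.sum_congr rfl fun s _ => ?_
  rw [Polynomial.coeToPowerSeries.ringHom_apply, ← Polynomial.C_mul_X_pow_eq_monomial]
  simp [mul_assoc]

/-- The matrix whose `i`-th row lists the coefficients of `∏_{l ≠ i} (1 - xₗ t)`. -/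
noncomputable def erasedProdMatrix (x : Fin m → S) : Matrix (Fin m) (Fin m) S :=
  Matrix.of fun i s => (erasedProd x i).coeff s

/-- The Jacobi–Trudi matrix with `(s, j)` entry `h_{n + aⱼ - s}(x / y)`, where `n` is the number
of `y`'s and `hₖ = 0` for `k < 0`. -/
noncomputable def jacobiTrudiMatrix (x : Fin m → S) (y : κ → S) (a : Fin m → ℕ) :
    Matrix (Fin m) (Fin m) S :=
  Matrix.of fun s j => coeff (Fintype.card κ + a j) (X ^ (s : ℕ) * superGenFun x y)

theorem erasedProdMatrix_mul_jacobiTrudiMatrix (x : Fin m → S) (y : κ → S) (a : Fin m → ℕ) :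
    erasedProdMatrix x * jacobiTrudiMatrix x y a =
      Matrix.of fun i j => (∏ k, (x i - y k)) * x i ^ a j := by
  ext i j
  calc (erasedProdMatrix x * jacobiTrudiMatrix x y a) i j
      = coeff (Fintype.card κ + a j) ((erasedProd x i : S⟦X⟧) * superGenFun x y) := by
        rw [coeff_coe_mul_eq_sum (natDegree_erasedProd_lt x i), Matrix.mul_apply]
        rfl
    _ = (∏ k, (x i - y k)) * x i ^ a j := by
        rw [erasedProd_mul_superGenFun, ← Finset.card_univ, coeff_prod_mul_geomSeries, mul_comm]

theorem det_erasedProdMatrix_mul_det_jacobiTrudiMatrix (x : Fin m → S) (y : κ → S) (a : Fin m → ℕ) :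
    (erasedProdMatrix x).det * (jacobiTrudiMatrix x y a).det =
      (∏ i, ∏ j, (x i - y j)) * (Matrix.of fun i j => x i ^ a j).det := by
  rw [← Matrix.det_mul, erasedProdMatrix_mul_jacobiTrudiMatrix, ← Matrix.det_mul_column]
  rfl

theorem det_jacobiTrudiMatrix_of_isEmpty [IsEmpty κ] (x : Fin m → S) (y : κ → S) :
    (jacobiTrudiMatrix x y fun j => j).det = 1 := by
  rw [Matrix.det_of_isUpperTriangular]
  · refine Finset.prod_eq_one fun s _ => ?_
    simp [jacobiTrudiMatrix, coeff_X_pow_mul', constantCoeff_superGenFun]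
  · intro s j hjs
    simpa [jacobiTrudiMatrix, coeff_X_pow_mul'] using fun h => absurd hjs h.not_gt

theorem det_erasedProdMatrix (x : Fin m → S) :
    (erasedProdMatrix x).det = (Matrix.vandermonde x).det := by
  have h := det_erasedProdMatrix_mul_det_jacobiTrudiMatrix x (Fin.elim0 : Fin 0 → S) fun j => j
  simpa [det_jacobiTrudiMatrix_of_isEmpty, Matrix.vandermonde] using h

theorem det_vandermonde_mul_det_jacobiTrudiMatrix (x : Fin m → S) (y : κ → S) (a : Fin m → ℕ) :
    (Matrix.vandermonde x).det * (jacobiTrudiMatrix x y a).det =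
      (∏ i, ∏ j, (x i - y j)) * (Matrix.of fun i j => x i ^ a j).det := by
  rw [← det_erasedProdMatrix, det_erasedProdMatrix_mul_det_jacobiTrudiMatrix]

theorem det_mem_of_forall_mem {R : Type*} [CommRing R] [Algebra R S] {ι : Type*}
    [Fintype ι] [DecidableEq ι] (A : Subalgebra R S) {M : Matrix ι ι S}
    (hM : ∀ i j, M i j ∈ A) : M.det ∈ A := by
  rw [Matrix.det_apply]
  exact A.sum_mem fun σ _ => zsmul_mem (A.prod_mem fun i _ => hM _ _) _

theorem det_jacobiTrudiMatrix_mem {R : Type*} [CommRing R] [Algebra R S] (A : Subalgebra R S)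
    {x : Fin m → S} {y : κ → S} (hA : ∀ k, coeff k (superGenFun x y) ∈ A) (a : Fin m → ℕ) :
    (jacobiTrudiMatrix x y a).det ∈ A := by
  refine det_mem_of_forall_mem A fun s j => ?_
  rw [jacobiTrudiMatrix, Matrix.of_apply, coeff_X_pow_mul']
  split_ifs
  · exact hA _
  · exact A.zero_mem

theorem aeval_comp_perm_of_isSymmetric {R ι : Type*} [CommSemiring R] [Algebra R S]
    {f : MvPolynomial ι R} (hf : f.IsSymmetric) (x : ι → S) (σ : Equiv.Perm ι) :
    MvPolynomial.aeval (x ∘ σ) f = MvPolynomial.aeval x f := by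
  rw [← MvPolynomial.aeval_rename, hf σ]

theorem aeval_mul_det_vandermonde {R : Type*} [CommRing R] [Algebra R S]
    {f : MvPolynomial (Fin m) R} (hf : f.IsSymmetric) (x : Fin m → S) :
    MvPolynomial.aeval x f * (Matrix.vandermonde x).det =
      ∑ d ∈ f.support, f.coeff d • (Matrix.of fun i j => x i ^ (d j + j : ℕ)).det := by
  have h_expand (σ : Equiv.Perm (Fin m)) : MvPolynomial.aeval x f =
      ∑ d ∈ f.support, f.coeff d • ∏ i, x (σ i) ^ d i := by
    rw [← aeval_comp_perm_of_isSymmetric hf x σ, MvPolynomial.aeval_def, MvPolynomial.eval₂_eq']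
    simp [Algebra.smul_def]
  simp only [Matrix.det_apply, Finset.mul_sum, Finset.smul_sum]
  rw [Finset.sum_comm]
  refine Finset.sum_congr rfl fun σ _ => ?_
  rw [h_expand σ, Finset.sum_mul]
  refine Finset.sum_congr rfl fun d _ => ?_
  simp only [Matrix.vandermonde_apply, Matrix.of_apply, pow_add, Finset.prod_mul_distrib,
    mul_smul_comm, smul_mul_assoc]
  exact smul_comm _ _ _

theorem prod_sub_mul_aeval_mem [IsDomain S] {R : Type*} [CommRing R] [Algebra R S]
    (A : Subalgebra R S) {x : Fin m → S} (hx : Function.Injective x) {y : κ → S}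
    (hA : ∀ k, coeff k (superGenFun x y) ∈ A) {f : MvPolynomial (Fin m) R} (hf : f.IsSymmetric) :
    (∏ i, ∏ j, (x i - y j)) * MvPolynomial.aeval x f ∈ A := by
  have h_eq : (∏ i, ∏ j, (x i - y j)) * MvPolynomial.aeval x f =
      ∑ d ∈ f.support, f.coeff d • (jacobiTrudiMatrix x y fun j => d j + j).det := by
    refine mul_left_cancel₀ (Matrix.det_vandermonde_ne_zero_iff.2 hx) ?_
    calc (Matrix.vandermonde x).det * ((∏ i, ∏ j, (x i - y j)) * MvPolynomial.aeval x f)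
        = (∏ i, ∏ j, (x i - y j)) *
            (MvPolynomial.aeval x f * (Matrix.vandermonde x).det) := by ring
      _ = _ := by
        simp only [aeval_mul_det_vandermonde hf, Finset.mul_sum, mul_smul_comm,
          det_vandermonde_mul_det_jacobiTrudiMatrix]
  rw [h_eq]
  exact A.sum_mem fun d _ => A.smul_mem (det_jacobiTrudiMatrix_mem A hA _) _

theorem aeval_mem_of_sum_pow_mem [IsDomain S] {K : Type*} [Field K] [CharZero K] [Algebra K S]
    (A : Subalgebra K S) {x : Fin m → S} (hx : Function.Injective x)
    (hA : ∀ k, 1 ≤ k → ∑ i, x i ^ k ∈ A) {f : MvPolynomial (Fin m) K} (hf : f.IsSymmetric) :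
    MvPolynomial.aeval x f ∈ A := by
  have h_coeff := coeff_superGenFun_mem A (x := x) (y := (Fin.elim0 : Fin 0 → S))
    (by simpa using hA)
  simpa using prod_sub_mul_aeval_mem A hx h_coeff hf

end JacobiTrudi

section DoublySymmetric

open MvPolynomial

/-- The power-sum difference `pₖ(x; y) = ∑ᵢ xᵢᵏ - ∑ⱼ yⱼᵏ`. -/
noncomputable def superPsum (ι κ R : Type*) [Fintype ι] [Fintype κ] [CommRing R] (k : ℕ) :
    MvPolynomial (ι ⊕ κ) R :=
  ∑ i, X (Sum.inl i) ^ k - ∑ j, X (Sum.inr j) ^ k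

/-- The algebra generated by the power-sum differences of positive degree. -/
noncomputable def superPsumSubalgebra (ι κ R : Type*) [Fintype ι] [Fintype κ] [CommRing R] :
    Subalgebra R (MvPolynomial (ι ⊕ κ) R) :=
  Algebra.adjoin R {q | ∃ k : ℕ, 1 ≤ k ∧ q = superPsum ι κ R k}

/-- The polynomials in `x` and `y` that are symmetric in each of the two sets of variables. -/
noncomputable def doublySymmetricSubalgebra (ι κ R : Type*) [CommRing R] :
    Subalgebra R (MvPolynomial (ι ⊕ κ) R) :=
  ⨅ (σ : Equiv.Perm ι) (τ : Equiv.Perm κ),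
    AlgHom.equalizer (rename (Sum.map σ τ)) (AlgHom.id R (MvPolynomial (ι ⊕ κ) R))

/-- The product `∏ᵢⱼ (xᵢ - yⱼ)`, i.e. the resultant of `∏ᵢ (t - xᵢ)` and `∏ⱼ (t - yⱼ)`. -/
noncomputable def crossProd (ι κ R : Type*) [Fintype ι] [Fintype κ] [CommRing R] :
    MvPolynomial (ι ⊕ κ) R :=
  ∏ i, ∏ j, (X (Sum.inl i) - X (Sum.inr j))

section CommRing

variable {ι κ R : Type*} [CommRing R]

theorem mem_doublySymmetricSubalgebra {P : MvPolynomial (ι ⊕ κ) R} :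
    P ∈ doublySymmetricSubalgebra ι κ R ↔
      ∀ (σ : Equiv.Perm ι) (τ : Equiv.Perm κ), rename (Sum.map σ τ) P = P := by
  simp [doublySymmetricSubalgebra, Algebra.mem_iInf]

theorem mem_doublySymmetricSubalgebra_of_rename_eq {P : MvPolynomial (ι ⊕ κ) R}
    (hx : ∀ σ : Equiv.Perm ι, rename (Sum.map σ id) P = P)
    (hy : ∀ τ : Equiv.Perm κ, rename (Sum.map id τ) P = P) :
    P ∈ doublySymmetricSubalgebra ι κ R := by
  refine mem_doublySymmetricSubalgebra.2 fun σ τ => ?_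
  conv_rhs => rw [← hx σ, ← hy τ, rename_rename, Sum.map_comp_map]
  rfl

theorem sum_rename_isSymmetric [Fintype ι] [DecidableEq ι] (p : MvPolynomial ι R) :
    (∑ σ : Equiv.Perm ι, rename σ p).IsSymmetric := by
  intro τ
  simp only [map_sum, rename_rename]
  exact Fintype.sum_equiv (Equiv.mulLeft τ) _ _ fun σ => rfl

theorem mul_mem_of_mem_sup {S : Type*} [CommRing S] [Algebra R S] {A B : Subalgebra R S} {r c : S}
    (h : ∀ b ∈ B, r * b ∈ A) (hc : c ∈ A ⊔ B) : r * c ∈ A := by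
  rw [← Subalgebra.mem_toSubmodule, ← Subalgebra.mul_toSubmodule] at hc
  induction hc using Submodule.mul_induction_on' with
  | mem_mul_mem a ha b hb =>
    rw [mul_left_comm]
    exact A.mul_mem ha (h b hb)
  | add c _ d _ hc hd =>
    rw [mul_add]
    exact A.add_mem hc hd

variable [Fintype ι] [Fintype κ]

theorem superPsum_mem_superPsumSubalgebra {k : ℕ} (hk : 1 ≤ k) :
    superPsum ι κ R k ∈ superPsumSubalgebra ι κ R :=
  Algebra.subset_adjoin ⟨k, hk, rfl⟩

theorem rename_superPsum (σ : Equiv.Perm ι) (τ : Equiv.Perm κ) (k : ℕ) :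
    rename (Sum.map σ τ) (superPsum ι κ R k) = superPsum ι κ R k := by
  simp only [superPsum, map_sub, map_sum, map_pow, rename_X, Sum.map_inl, Sum.map_inr]
  rw [Equiv.sum_comp σ fun i => (X (Sum.inl i) : MvPolynomial (ι ⊕ κ) R) ^ k,
    Equiv.sum_comp τ fun j => (X (Sum.inr j) : MvPolynomial (ι ⊕ κ) R) ^ k]

theorem crossProd_mem_doublySymmetricSubalgebra :
    crossProd ι κ R ∈ doublySymmetricSubalgebra ι κ R := by
  rw [mem_doublySymmetricSubalgebra]
  intro σ τ
  simp only [crossProd, map_prod, map_sub, rename_X, Sum.map_inl, Sum.map_inr]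
  rw [Equiv.prod_comp σ fun i => ∏ j, (X (Sum.inl i) - X (Sum.inr (τ j)) : MvPolynomial (ι ⊕ κ) R)]
  exact Finset.prod_congr rfl fun i _ =>
    Equiv.prod_comp τ fun j => (X (Sum.inl i) - X (Sum.inr j) : MvPolynomial (ι ⊕ κ) R)

theorem sum_sum_rename_mem_sup [DecidableEq ι] [DecidableEq κ] (p : MvPolynomial (ι ⊕ κ) R) :
    ∑ σ : Equiv.Perm ι, ∑ τ : Equiv.Perm κ, rename (Sum.map σ τ) p ∈
      (symmetricSubalgebra ι R).map (rename Sum.inl) ⊔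
        (symmetricSubalgebra κ R).map (rename Sum.inr) := by
  induction p using MvPolynomial.induction_on' with
  | monomial s c =>
    have h_factor : ∑ σ : Equiv.Perm ι, ∑ τ : Equiv.Perm κ, rename (Sum.map σ τ) (monomial s c) =
        c • (rename Sum.inl (∑ σ : Equiv.Perm ι, rename σ (∏ i, X i ^ s (Sum.inl i))) *
          rename Sum.inr (∑ τ : Equiv.Perm κ, rename τ (∏ j, X j ^ s (Sum.inr j)))) := by
      rw [map_sum, map_sum, Finset.sum_mul_sum]
      simp only [Finset.smul_sum]
      refine Finset.sum_congr rfl fun σ _ => Finset.sum_congr rfl fun τ _ => ?_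
      rw [monomial_eq, Finsupp.prod_fintype _ _ (by simp), Fintype.prod_sum_type, ← C_mul']
      simp [map_prod]
    rw [h_factor]
    exact Subalgebra.smul_mem _ (mul_mem
      (Algebra.mem_sup_left (Subalgebra.mem_map.2 ⟨_, sum_rename_isSymmetric _, rfl⟩))
      (Algebra.mem_sup_right (Subalgebra.mem_map.2 ⟨_, sum_rename_isSymmetric _, rfl⟩))) c
  | add p q hp hq =>
    simp only [map_add, Finset.sum_add_distrib]
    exact add_mem hp hq

end CommRing

variable {K : Type*} [Field K] [CharZero K] {m n : ℕ}

theorem doublySymmetricSubalgebra_le_sup {ι κ : Type*} [Finite ι] [Finite κ] :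
    doublySymmetricSubalgebra ι κ K ≤ (symmetricSubalgebra ι K).map (rename Sum.inl) ⊔
      (symmetricSubalgebra κ K).map (rename Sum.inr) := by
  classical
  have := Fintype.ofFinite ι
  have := Fintype.ofFinite κ
  intro F hF
  have h_sum := sum_sum_rename_mem_sup F
  simp only [mem_doublySymmetricSubalgebra.1 hF, Finset.sum_const, Finset.card_univ, smul_smul,
    ← Nat.cast_smul_eq_nsmul K] at h_sum
  have h_card : (Fintype.card (Equiv.Perm ι) * Fintype.card (Equiv.Perm κ) : K) ≠ 0 := by
    simp only [ne_eq, mul_eq_zero, Nat.cast_eq_zero, Fintype.card_ne_zero, or_self,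
      not_false_eq_true]
  simpa only [inv_smul_smul₀ h_card] using Subalgebra.smul_mem _ h_sum
    (Fintype.card (Equiv.Perm ι) * Fintype.card (Equiv.Perm κ) : K)⁻¹

theorem doublySymmetricSubalgebra_le_superPsumSubalgebra_sup {ι : Type*} [Fintype ι] :
    doublySymmetricSubalgebra ι (Fin n) K ≤ superPsumSubalgebra ι (Fin n) K ⊔
      (symmetricSubalgebra ι K).map (rename Sum.inl) := by
  refine doublySymmetricSubalgebra_le_sup.trans (sup_le le_sup_right ?_)
  rintro _ ⟨g, hg, rfl⟩
  rw [AlgHom.coe_toRingHom, rename_eq_aeval Sum.inr]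
  refine aeval_mem_of_sum_pow_mem (S := MvPolynomial (ι ⊕ Fin n) K) _
    (X_injective.comp Sum.inr_injective) (fun k hk => ?_) hg
  have h_eq : ∑ j, ((X ∘ Sum.inr) j : MvPolynomial (ι ⊕ Fin n) K) ^ k =
      rename Sum.inl (psum ι K k) - superPsum ι (Fin n) K k := by
    simp [superPsum, psum]
  rw [h_eq]
  exact sub_mem (Algebra.mem_sup_right (Subalgebra.mem_map.2 ⟨_, psum_isSymmetric _ _ k, rfl⟩))
    (Algebra.mem_sup_left (superPsum_mem_superPsumSubalgebra hk))

theorem crossProd_mul_rename_inl_mem_superPsumSubalgebra {κ : Type*} [Fintype κ]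
    {f : MvPolynomial (Fin m) K} (hf : f.IsSymmetric) :
    crossProd (Fin m) κ K * rename Sum.inl f ∈ superPsumSubalgebra (Fin m) κ K := by
  have h_coeff := coeff_superGenFun_mem (superPsumSubalgebra (Fin m) κ K)
    (x := X ∘ Sum.inl) (y := X ∘ Sum.inr) fun _ => superPsum_mem_superPsumSubalgebra
  have h_mem := prod_sub_mul_aeval_mem _ (X_injective.comp Sum.inl_injective) h_coeff hf
  rwa [← rename_eq_aeval] at h_mem

theorem crossProd_mul_mem_superPsumSubalgebra {F : MvPolynomial (Fin m ⊕ Fin n) K}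
    (hF : F ∈ doublySymmetricSubalgebra (Fin m) (Fin n) K) :
    crossProd (Fin m) (Fin n) K * F ∈ superPsumSubalgebra (Fin m) (Fin n) K := by
  refine mul_mem_of_mem_sup ?_ (doublySymmetricSubalgebra_le_superPsumSubalgebra_sup hF)
  rintro _ ⟨f, hf, rfl⟩
  exact crossProd_mul_rename_inl_mem_superPsumSubalgebra hf

end DoublySymmetric

section Divisibility

open MvPolynomial Function

theorem X_sub_X_dvd_iff {ι R : Type*} [CommRing R] [DecidableEq ι] {a b : ι} (hab : a ≠ b)
    {P : MvPolynomial ι R} : X a - X b ∣ P ↔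
    aeval (update (X : ι → MvPolynomial ι R) a (X b)) P = 0 := by
  constructor
  · rintro ⟨Q, rfl⟩
    simp [hab.symm]
  · intro hP
    let I : Ideal (MvPolynomial ι R) := Ideal.span {X a - X b}
    have h_mod : (Ideal.Quotient.mkₐ R I).comp (aeval (update X a (X b))) =
        Ideal.Quotient.mkₐ R I := by
      ext c
      obtain rfl | hc := eq_or_ne c a
      · simpa using (Ideal.Quotient.eq.2 (Ideal.mem_span_singleton_self _)).symm
      · simp [hc]
    have h_zero := DFunLike.congr_fun h_mod P
    rw [AlgHom.comp_apply, hP, map_zero] at h_zero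
    exact Ideal.mem_span_singleton.1 (Ideal.Quotient.eq_zero_iff_mem.1 h_zero.symm)

theorem prime_X_sub_X {ι R : Type*} [CommRing R] [IsDomain R] {a b : ι} (hab : a ≠ b) :
    Prime (X a - X b : MvPolynomial ι R) := by
  classical
  refine ⟨sub_ne_zero.2 (X_injective.ne hab), fun h_unit => ?_, fun P Q h_dvd => ?_⟩
  · simpa using (X_sub_X_dvd_iff hab).1 (h_unit.dvd (a := 1))
  · simpa only [X_sub_X_dvd_iff hab, map_mul, mul_eq_zero] using h_dvd

theorem X_sub_X_dvd_of_mem_doublySymmetricSubalgebra {ι κ R : Type*} [CommRing R]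
    {P : MvPolynomial (ι ⊕ κ) R} (hP : P ∈ doublySymmetricSubalgebra ι κ R) {i₀ : ι} {j₀ : κ}
    (h_dvd : X (Sum.inl i₀) - X (Sum.inr j₀) ∣ P) (i : ι) (j : κ) :
    X (Sum.inl i) - X (Sum.inr j) ∣ P := by
  classical
  have h := map_dvd (rename (R := R) (Sum.map (Equiv.swap i₀ i) (Equiv.swap j₀ j))) h_dvd
  rw [mem_doublySymmetricSubalgebra.1 hP] at h
  simpa using h

variable {ι κ K : Type*} [Fintype ι] [Fintype κ] [Field K]

theorem crossProd_ne_zero : crossProd ι κ K ≠ 0 :=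
  Finset.prod_ne_zero_iff.2 fun _ _ => Finset.prod_ne_zero_iff.2 fun _ _ =>
    (prime_X_sub_X Sum.inl_ne_inr).ne_zero

theorem crossProd_dvd {P : MvPolynomial (ι ⊕ κ) K}
    (h : ∀ i j, X (Sum.inl i) - X (Sum.inr j) ∣ P) : crossProd ι κ K ∣ P := by
  classical
  rw [crossProd, ← Fintype.prod_prod_type' fun i j =>
    (X (Sum.inl i) - X (Sum.inr j) : MvPolynomial (ι ⊕ κ) K)]
  refine Finset.prod_dvd_of_isRelPrime ?_ fun p _ => h p.1 p.2
  rintro ⟨i, j⟩ - ⟨i', j'⟩ - h_ne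
  refine (prime_X_sub_X Sum.inl_ne_inr).irreducible.isRelPrime_iff_not_dvd.2 ?_
  change ¬ X (Sum.inl i) - X (Sum.inr j) ∣ X (Sum.inl i') - X (Sum.inr j')
  rw [X_sub_X_dvd_iff Sum.inl_ne_inr, map_sub, aeval_X, aeval_X, sub_eq_zero]
  intro h_eq
  obtain rfl | hi := eq_or_ne i' i
  · simp_all
  · simp [hi] at h_eq

theorem mem_doublySymmetricSubalgebra_of_crossProd_mul_mem {F : MvPolynomial (ι ⊕ κ) K}
    (hF : crossProd ι κ K * F ∈ doublySymmetricSubalgebra ι κ K) :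
    F ∈ doublySymmetricSubalgebra ι κ K := by
  rw [mem_doublySymmetricSubalgebra] at hF ⊢
  intro σ τ
  have h := hF σ τ
  rw [map_mul, mem_doublySymmetricSubalgebra.1 crossProd_mem_doublySymmetricSubalgebra] at h
  exact mul_left_cancel₀ crossProd_ne_zero h

theorem mem_superPsumSubalgebra_of_forall_dvd [CharZero K] {m n : ℕ}
    {P : MvPolynomial (Fin m ⊕ Fin n) K} (hP : P ∈ doublySymmetricSubalgebra (Fin m) (Fin n) K)
    (h_dvd : ∀ i j, X (Sum.inl i) - X (Sum.inr j) ∣ P) :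
    P ∈ superPsumSubalgebra (Fin m) (Fin n) K := by
  obtain ⟨F, rfl⟩ := crossProd_dvd h_dvd
  exact crossProd_mul_mem_superPsumSubalgebra
    (mem_doublySymmetricSubalgebra_of_crossProd_mul_mem hP)

end Divisibility

section Supersymmetric

open MvPolynomial Function

section CommRing

variable {ι κ R : Type*} [CommRing R] [DecidableEq ι] [DecidableEq κ]

/-- The substitution `xᵢ = yⱼ = p`. -/
noncomputable def diagSubst (i : ι) (j : κ) (p : MvPolynomial (ι ⊕ κ) R) :
    MvPolynomial (ι ⊕ κ) R →ₐ[R] MvPolynomial (ι ⊕ κ) R :=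
  aeval (Sum.elim (update (X ∘ Sum.inl) i p) (update (X ∘ Sum.inr) j p))

variable (ι κ R) in
/-- The supersymmetric polynomials: those symmetric in each set of variables for which the result
of the substitution `xᵢ = yⱼ = p` does not depend on the polynomial `p`, for any `i` and `j`. -/
noncomputable def supersymmetricSubalgebra : Subalgebra R (MvPolynomial (ι ⊕ κ) R) :=
  doublySymmetricSubalgebra ι κ R ⊓
    ⨅ (i : ι) (j : κ) (p : MvPolynomial (ι ⊕ κ) R),
      AlgHom.equalizer (diagSubst i j p) (diagSubst i j 0)

theorem mem_supersymmetricSubalgebra {P : MvPolynomial (ι ⊕ κ) R} :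
    P ∈ supersymmetricSubalgebra ι κ R ↔ P ∈ doublySymmetricSubalgebra ι κ R ∧
      ∀ i j p, diagSubst i j p P = diagSubst i j 0 P := by
  simp [supersymmetricSubalgebra, Algebra.mem_iInf]

theorem diagSubst_X_inr (i : ι) (j : κ) :
    diagSubst i j (X (Sum.inr j) : MvPolynomial (ι ⊕ κ) R) =
      aeval (update X (Sum.inl i) (X (Sum.inr j))) := by
  refine algHom_ext fun v => ?_
  rcases v with k | k <;> simp +contextual [diagSubst, update_apply]

theorem diagSubst_rename (σ : Equiv.Perm ι) (τ : Equiv.Perm κ) (i : ι) (j : κ)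
    (p P : MvPolynomial (ι ⊕ κ) R) :
    diagSubst (σ i) (τ j) (rename (Sum.map σ τ) p) (rename (Sum.map σ τ) P) =
      rename (Sum.map σ τ) (diagSubst i j p P) := by
  have h_comp : (diagSubst (σ i) (τ j) (rename (Sum.map σ τ) p)).comp (rename (Sum.map σ τ)) =
      (rename (Sum.map σ τ)).comp (diagSubst i j p) := by
    refine algHom_ext fun v => ?_
    rcases v with k | k
    · by_cases hk : k = i <;> simp [diagSubst, hk]
    · by_cases hk : k = j <;> simp [diagSubst, hk]
  exact DFunLike.congr_fun h_comp P

theorem sum_update_pow [Fintype ι] (f : ι → R) (i : ι) (r : R) (k : ℕ) :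
    ∑ l, update f i r l ^ k = r ^ k + ∑ l ∈ Finset.univ \ {i}, f l ^ k := by
  rw [← Finset.sum_update_of_mem (Finset.mem_univ i)]
  exact Finset.sum_congr rfl fun l _ => apply_update (fun _ q => q ^ k) f i r l

theorem superPsumSubalgebra_le_supersymmetricSubalgebra [Fintype ι] [Fintype κ] :
    superPsumSubalgebra ι κ R ≤ supersymmetricSubalgebra ι κ R := by
  refine Algebra.adjoin_le ?_
  rintro _ ⟨k, -, rfl⟩
  refine mem_supersymmetricSubalgebra.2 ⟨mem_doublySymmetricSubalgebra.2 fun σ τ =>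
    rename_superPsum σ τ k, fun i j p => ?_⟩
  simp only [superPsum, diagSubst, map_sub, map_sum, map_pow, aeval_X, Sum.elim_inl, Sum.elim_inr,
    sum_update_pow (R := MvPolynomial (ι ⊕ κ) R), add_sub_add_left_eq_sub]

theorem mem_supersymmetricSubalgebra_of_diagSubst_eq {P : MvPolynomial (ι ⊕ κ) R}
    (hP : P ∈ doublySymmetricSubalgebra ι κ R) {i₀ : ι} {j₀ : κ}
    (h_subst : ∀ p, diagSubst i₀ j₀ p P = diagSubst i₀ j₀ 0 P) :
    P ∈ supersymmetricSubalgebra ι κ R := by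
  refine mem_supersymmetricSubalgebra.2 ⟨hP, fun i j p => ?_⟩
  let σ := Equiv.swap i₀ i
  let τ := Equiv.swap j₀ j
  have h_move (q : MvPolynomial (ι ⊕ κ) R) : diagSubst i j (rename (Sum.map σ τ) q) P =
      rename (Sum.map σ τ) (diagSubst i₀ j₀ q P) := by
    rw [← diagSubst_rename, mem_doublySymmetricSubalgebra.1 hP, Equiv.swap_apply_left,
      Equiv.swap_apply_left]
  obtain ⟨q, rfl⟩ := (renameEquiv R (Equiv.sumCongr σ τ)).surjective p
  calc diagSubst i j (rename (Sum.map σ τ) q) P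
      = rename (Sum.map σ τ) (diagSubst i₀ j₀ q P) := h_move q
    _ = rename (Sum.map σ τ) (diagSubst i₀ j₀ 0 P) := by rw [h_subst]
    _ = diagSubst i j 0 P := by rw [← h_move, map_zero]

/-- The substitution `xᵢ = yⱼ = T`, where `T` is a new variable. -/
noncomputable def genericDiagSubst (i : ι) (j : κ) :
    MvPolynomial (ι ⊕ κ) R →ₐ[R] Polynomial (MvPolynomial (ι ⊕ κ) R) :=
  aeval (Sum.elim (update (fun k => Polynomial.C (X (Sum.inl k))) i Polynomial.X)
    (update (fun k => Polynomial.C (X (Sum.inr k))) j Polynomial.X))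

theorem eval_genericDiagSubst (i : ι) (j : κ) (p P : MvPolynomial (ι ⊕ κ) R) :
    (genericDiagSubst i j P).eval p = diagSubst i j p P := by
  have h_comp : ((Polynomial.aeval p).restrictScalars R).comp (genericDiagSubst i j) =
      diagSubst i j p := by
    refine algHom_ext fun v => ?_
    rcases v with k | k <;>
      simp only [AlgHom.comp_apply, genericDiagSubst, diagSubst, aeval_X, Sum.elim_inl,
        Sum.elim_inr, update_apply] <;>
      split_ifs <;> simp
  exact DFunLike.congr_fun h_comp P

theorem mem_supersymmetricSubalgebra_of_genericDiagSubst_eq_C {P q : MvPolynomial (ι ⊕ κ) R}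
    (hP : P ∈ doublySymmetricSubalgebra ι κ R) {i₀ : ι} {j₀ : κ}
    (h_subst : genericDiagSubst i₀ j₀ P = Polynomial.C q) :
    P ∈ supersymmetricSubalgebra ι κ R :=
  mem_supersymmetricSubalgebra_of_diagSubst_eq hP (i₀ := i₀) (j₀ := j₀) fun p => by
    simp only [← eval_genericDiagSubst, h_subst, Polynomial.eval_C]

end CommRing

section Restriction

variable {R : Type*} [CommRing R] {m n : ℕ}

variable (R m n) in
/-- The substitution `x₀ = y₀ = 0`, which drops one variable of each kind. -/
noncomputable def dropZeroth :
    MvPolynomial (Fin (m + 1) ⊕ Fin (n + 1)) R →ₐ[R] MvPolynomial (Fin m ⊕ Fin n) R :=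
  aeval (Sum.elim (Fin.cons 0 (X ∘ Sum.inl)) (Fin.cons 0 (X ∘ Sum.inr)))

theorem dropZeroth_superPsum {k : ℕ} (hk : 1 ≤ k) :
    dropZeroth R m n (superPsum (Fin (m + 1)) (Fin (n + 1)) R k) =
      superPsum (Fin m) (Fin n) R k := by
  simp [dropZeroth, superPsum, Fin.sum_univ_succ, Nat.ne_of_gt hk]

theorem map_dropZeroth_superPsumSubalgebra :
    (superPsumSubalgebra (Fin (m + 1)) (Fin (n + 1)) R).map (dropZeroth R m n) =
      superPsumSubalgebra (Fin m) (Fin n) R := by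
  rw [superPsumSubalgebra, AlgHom.map_adjoin, superPsumSubalgebra]
  congr 1
  ext q
  constructor
  · rintro ⟨_, ⟨k, hk, rfl⟩, rfl⟩
    exact ⟨k, hk, dropZeroth_superPsum hk⟩
  · rintro ⟨k, hk, rfl⟩
    exact ⟨_, ⟨k, hk, rfl⟩, dropZeroth_superPsum hk⟩

theorem rename_succ_dropZeroth (P : MvPolynomial (Fin (m + 1) ⊕ Fin (n + 1)) R) :
    rename (Sum.map Fin.succ Fin.succ) (dropZeroth R m n P) = diagSubst 0 0 0 P := by
  have h_comp : (rename (Sum.map Fin.succ Fin.succ)).comp (dropZeroth R m n) =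
      diagSubst 0 0 0 := by
    refine algHom_ext fun v => ?_
    rcases v with k | k <;> cases k using Fin.cases <;> simp [dropZeroth, diagSubst]
  exact DFunLike.congr_fun h_comp P

theorem dropZeroth_diagSubst (i : Fin m) (j : Fin n) (p : MvPolynomial (Fin m ⊕ Fin n) R)
    (P : MvPolynomial (Fin (m + 1) ⊕ Fin (n + 1)) R) :
    dropZeroth R m n (diagSubst i.succ j.succ (rename (Sum.map Fin.succ Fin.succ) p) P) =
      diagSubst i j p (dropZeroth R m n P) := by
  have h_section : dropZeroth R m n (rename (Sum.map Fin.succ Fin.succ) p) = p := by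
    rw [dropZeroth, aeval_rename]
    conv_rhs => rw [← aeval_X_left_apply p]
    congr 2
    ext1 (k | k) <;> simp
  have h_comp : (dropZeroth R m n).comp
      (diagSubst i.succ j.succ (rename (Sum.map Fin.succ Fin.succ) p)) =
        (diagSubst i j p).comp (dropZeroth R m n) := by
    refine algHom_ext fun v => ?_
    rcases v with k | k <;> cases k using Fin.cases with
    | zero => simp [dropZeroth, diagSubst, (Fin.succ_ne_zero _).symm]
    | succ k =>
      simp only [AlgHom.comp_apply, diagSubst, aeval_X, Sum.elim_inl, Sum.elim_inr, update_apply,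
        apply_ite (dropZeroth R m n), h_section]
      simp [dropZeroth, update_apply]
  exact DFunLike.congr_fun h_comp P

theorem rename_perm_dropZeroth (σ : Equiv.Perm (Fin m)) (τ : Equiv.Perm (Fin n))
    (P : MvPolynomial (Fin (m + 1) ⊕ Fin (n + 1)) R) :
    rename (Sum.map σ τ) (dropZeroth R m n P) =
      dropZeroth R m n (rename (Sum.map (Equiv.Perm.decomposeFin.symm (0, σ))
        (Equiv.Perm.decomposeFin.symm (0, τ))) P) := by
  have h_comp : (rename (Sum.map σ τ)).comp (dropZeroth R m n) =
      (dropZeroth R m n).comp (rename (Sum.map (Equiv.Perm.decomposeFin.symm (0, σ))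
        (Equiv.Perm.decomposeFin.symm (0, τ)))) := by
    refine algHom_ext fun v => ?_
    rcases v with k | k <;> cases k using Fin.cases <;> simp [dropZeroth]
  exact DFunLike.congr_fun h_comp P

theorem dropZeroth_mem_supersymmetricSubalgebra
    {P : MvPolynomial (Fin (m + 1) ⊕ Fin (n + 1)) R}
    (hP : P ∈ supersymmetricSubalgebra (Fin (m + 1)) (Fin (n + 1)) R) :
    dropZeroth R m n P ∈ supersymmetricSubalgebra (Fin m) (Fin n) R := by
  obtain ⟨h_symm, h_subst⟩ := mem_supersymmetricSubalgebra.1 hP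
  refine mem_supersymmetricSubalgebra.2
    ⟨mem_doublySymmetricSubalgebra.2 fun σ τ => ?_, fun i j p => ?_⟩
  · rw [rename_perm_dropZeroth, mem_doublySymmetricSubalgebra.1 h_symm]
  · rw [← dropZeroth_diagSubst, ← dropZeroth_diagSubst, h_subst, map_zero]

theorem X_sub_X_dvd_of_dropZeroth_eq_zero {P : MvPolynomial (Fin (m + 1) ⊕ Fin (n + 1)) R}
    (hP : P ∈ supersymmetricSubalgebra (Fin (m + 1)) (Fin (n + 1)) R)
    (h_zero : dropZeroth R m n P = 0) (i : Fin (m + 1)) (j : Fin (n + 1)) :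
    X (Sum.inl i) - X (Sum.inr j) ∣ P := by
  obtain ⟨h_symm, h_subst⟩ := mem_supersymmetricSubalgebra.1 hP
  refine X_sub_X_dvd_of_mem_doublySymmetricSubalgebra h_symm (i₀ := 0) (j₀ := 0) ?_ i j
  rw [X_sub_X_dvd_iff Sum.inl_ne_inr, ← diagSubst_X_inr, h_subst, ← rename_succ_dropZeroth, h_zero,
    map_zero]

end Restriction

variable {K : Type*} [Field K] [CharZero K] {m n : ℕ}

theorem supersymmetricSubalgebra_eq_superPsumSubalgebra :
    supersymmetricSubalgebra (Fin m) (Fin n) K = superPsumSubalgebra (Fin m) (Fin n) K := by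
  refine le_antisymm (fun P hP => ?_) superPsumSubalgebra_le_supersymmetricSubalgebra
  induction m generalizing n with
  | zero =>
    exact mem_superPsumSubalgebra_of_forall_dvd (mem_supersymmetricSubalgebra.1 hP).1 finZeroElim
  | succ m ih =>
    cases n with
    | zero =>
      exact mem_superPsumSubalgebra_of_forall_dvd (mem_supersymmetricSubalgebra.1 hP).1
        fun _ => finZeroElim
    | succ n =>
      have h_drop := ih _ (dropZeroth_mem_supersymmetricSubalgebra hP)
      rw [← map_dropZeroth_superPsumSubalgebra] at h_drop
      obtain ⟨Q, hQ, h_eq⟩ := Subalgebra.mem_map.1 h_drop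
      have h_diff : P - Q ∈ supersymmetricSubalgebra (Fin (m + 1)) (Fin (n + 1)) K :=
        sub_mem hP (superPsumSubalgebra_le_supersymmetricSubalgebra hQ)
      have h_zero : dropZeroth K m n (P - Q) = 0 := by rw [map_sub, h_eq, sub_self]
      have h_mem : P - Q ∈ superPsumSubalgebra (Fin (m + 1)) (Fin (n + 1)) K :=
        mem_superPsumSubalgebra_of_forall_dvd (mem_supersymmetricSubalgebra.1 h_diff).1
          (X_sub_X_dvd_of_dropZeroth_eq_zero h_diff h_zero)
      simpa using add_mem h_mem hQ

theorem stmt_8_general {P q : MvPolynomial (Fin m ⊕ Fin n) K} (i₀ : Fin m) (j₀ : Fin n)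
    (hx : ∀ σ : Equiv.Perm (Fin m), rename (Sum.map σ id) P = P)
    (hy : ∀ τ : Equiv.Perm (Fin n), rename (Sum.map id τ) P = P)
    (h_cancel : genericDiagSubst i₀ j₀ P = Polynomial.C q) :
    P ∈ superPsumSubalgebra (Fin m) (Fin n) K := by
  rw [← supersymmetricSubalgebra_eq_superPsumSubalgebra]
  exact mem_supersymmetricSubalgebra_of_genericDiagSubst_eq_C
    (mem_doublySymmetricSubalgebra_of_rename_eq hx hy) h_cancel

end Supersymmetric

open MvPolynomial in
/-- **Structure theorem for supersymmetric polynomials (§2.3).**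
If `P ∈ ℚ[x₁,…,x_m, y₁,…,y_n]` is symmetric in the `x`'s, symmetric in the `y`'s, and
becomes independent of `T` under the substitution `x_m = y_n = T`, then `P` lies in the
`ℚ`-subalgebra generated by the power-sum differences `p_k = ∑ xᵢᵏ − ∑ yⱼᵏ`, `k ≥ 1`. -/
theorem stmt_8 (m n : ℕ) (hm : 1 ≤ m) (hn : 1 ≤ n)
    (P : MvPolynomial (Fin m ⊕ Fin n) ℚ)
    (hx : ∀ σ : Equiv.Perm (Fin m), rename (Sum.map (⇑σ) id) P = P)
    (hy : ∀ τ : Equiv.Perm (Fin n), rename (Sum.map id (⇑τ)) P = P)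
    (hcancel : ∃ q : MvPolynomial (Fin m ⊕ Fin n) ℚ,
      aeval (fun v : Fin m ⊕ Fin n =>
        match v with
        | Sum.inl i => if (i : ℕ) = m - 1 then
            (Polynomial.X : Polynomial (MvPolynomial (Fin m ⊕ Fin n) ℚ))
          else Polynomial.C (X (Sum.inl i))
        | Sum.inr j => if (j : ℕ) = n - 1 then
            (Polynomial.X : Polynomial (MvPolynomial (Fin m ⊕ Fin n) ℚ))
          else Polynomial.C (X (Sum.inr j))) P = Polynomial.C q) :
    P ∈ Algebra.adjoin ℚ {q : MvPolynomial (Fin m ⊕ Fin n) ℚ | ∃ k : ℕ, 1 ≤ k ∧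
      q = (∑ i : Fin m, X (Sum.inl i) ^ k) - ∑ j : Fin n, X (Sum.inr j) ^ k} := by
  obtain ⟨q, hq⟩ := hcancel
  refine stmt_8_general ⟨m - 1, by lia⟩ ⟨n - 1, by lia⟩ hx hy ((congrArg (aeval · P) ?_).trans hq)
  ext1 (i | j) <;> simp [Function.update_apply, Fin.ext_iff]
end
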